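/- Let k = k(n) ≥ 2 and p = p(n) > 0 be sequences such that k = ω(log n), k ≤ 2^{-11}·n, and d̂ ≤ n, where d̂ = p·k·C(n−1,k−1). Then with high probability (probability tending to 1 as n → ∞) the random hypergraph G = G^k(n,p) satisfies: for every subset B ⊆ E(G) of edges, the set V_B of vertices covered by B satisfies |V_B| ≥ 2^{-12}·min(|B|·k, n). -/

import Mathlib

open scoped BigOperators

/-- A `k`-uniform hypergraph on vertex set `Fin n`. -/
structure KGraph (n k : ℕ) where
  edges : Finset (Finset (Fin n))
  uniform : ∀ e ∈ edges, e.card = k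

namespace KGraph

variable {n k : ℕ}

/-- A loose path of edges from `x` to `y`: a nonempty list of edges, the first containing `x`,
the last containing `y`, with consecutive edges intersecting. -/
def IsLoosePath (G : KGraph n k) (x y : Fin n) (l : List (Finset (Fin n))) : Prop :=
  l ≠ [] ∧ (∀ e ∈ l, e ∈ G.edges) ∧ (∀ e ∈ l.head?, x ∈ e) ∧
    (∀ e ∈ l.getLast?, y ∈ e) ∧ l.Chain' (fun e f => (e ∩ f).Nonempty)

/-- Distance between two vertices: the smallest length of a loose path between them
(`0` if they are equal, `⊤` if there is no such path). -/
noncomputable def dist (G : KGraph n k) (x y : Fin n) : ℕ∞ :=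
  if x = y then 0
  else sInf ((fun l : List (Finset (Fin n)) => (l.length : ℕ∞)) '' {l | G.IsLoosePath x y l})

/-- Distance between two sets of vertices: the minimum over pairs. -/
noncomputable def setDist (G : KGraph n k) (A B : Set (Fin n)) : ℕ∞ :=
  ⨅ (x ∈ A) (y ∈ B), G.dist x y

/-- The closed `r`-th vertex-neighbourhood of a set of vertices. -/
noncomputable def vNhd (G : KGraph n k) (A : Set (Fin n)) (r : ℕ) : Set (Fin n) :=
  {v | G.setDist A {v} ≤ (r : ℕ∞)}

/-- The set of vertices covered by a set of edges. -/
def VB (B : Set (Finset (Fin n))) : Set (Fin n) :=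
  ⋃ e ∈ B, (e : Set (Fin n))

/-- The closed `r`-th vertex-neighbourhood of a set of edges. -/
noncomputable def vNhdE (G : KGraph n k) (B : Set (Finset (Fin n))) (r : ℕ) : Set (Fin n) :=
  G.vNhd (VB B) r

/-- The closed `r`-th edge-neighbourhood of a set of vertices: edges within distance `r - 1`. -/
noncomputable def eNhd (G : KGraph n k) (A : Set (Fin n)) (r : ℕ) : Set (Finset (Fin n)) :=
  {e | e ∈ G.edges ∧ G.setDist (e : Set (Fin n)) A ≤ ((r - 1 : ℕ) : ℕ∞)}

/-- The average vertex degree of `G`. -/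
noncomputable def avgDeg (G : KGraph n k) : ℝ :=
  (∑ v : Fin n, ((G.vNhd {v} 1).ncard : ℝ)) / n

/-- A `k`-graph on `n` vertices with average vertex degree `d ≥ k` is `ξ`-expanding if
(A.1) edge-neighbourhoods of vertices are not too large, (A.2) vertex-neighbourhoods of vertex
sets have size comparable to `|A| d^r`, and (A.3) vertex-neighbourhoods of edge sets are large. -/
def IsExpanding (G : KGraph n k) (ξ : ℝ) : Prop :=
  (k : ℝ) ≤ G.avgDeg ∧
  (∀ v : Fin n, ∀ r : ℕ, 1 ≤ r → G.avgDeg ^ r ≤ Real.sqrt ((n : ℝ) * k) →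
    ((G.eNhd {v} r).ncard : ℝ) ≤ ξ⁻¹ * G.avgDeg ^ r / k) ∧
  (∀ A : Set (Fin n), ∀ r : ℕ, 1 ≤ r →
    ξ * min ((A.ncard : ℝ) * G.avgDeg ^ r) (n : ℝ) ≤ ((G.vNhd A r).ncard : ℝ) ∧
    ((G.vNhd A r).ncard : ℝ) ≤ ξ⁻¹ * (A.ncard : ℝ) * G.avgDeg ^ r) ∧
  (∀ B : Set (Finset (Fin n)), B ⊆ (G.edges : Set (Finset (Fin n))) → ∀ r : ℕ, 1 ≤ r →
    ξ * min ((B.ncard : ℝ) * k * G.avgDeg ^ r) (n : ℝ) ≤ ((G.vNhdE B r).ncard : ℝ))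

/-- `CopsWin G c r` : with the cops currently on the vertices `c i`, the robber on `r`, and the
cops to move, the cops have a strategy to catch the robber. Either a cop is already on the
robber's vertex; or the cops can move (each by distance at most 1) so that a cop lands on the
robber; or the cops can move so that whatever the robber's reply, the cops still win. -/
inductive CopsWin (G : KGraph n k) {m : ℕ} : (Fin m → Fin n) → Fin n → Prop
  | caught (c : Fin m → Fin n) (r : Fin n) (i : Fin m) (h : c i = r) : CopsWin G c r
  | stepCaught (c c' : Fin m → Fin n) (r : Fin n)
      (hmove : ∀ i, G.dist (c i) (c' i) ≤ 1) (i : Fin m) (h : c' i = r) : CopsWin G c r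
  | step (c c' : Fin m → Fin n) (r : Fin n)
      (hmove : ∀ i, G.dist (c i) (c' i) ≤ 1)
      (h : ∀ r' : Fin n, G.dist r r' ≤ 1 → CopsWin G c' r') : CopsWin G c r

/-- The cop number of `G` : the least `m` such that `m` cops can be initially placed so as to
catch the robber wherever he starts. -/
noncomputable def copNumber (G : KGraph n k) : ℕ :=
  sInf {m : ℕ | ∃ c₀ : Fin m → Fin n, ∀ r₀ : Fin n, CopsWin G c₀ r₀}

/-- `G` is connected if all pairs of vertices are at finite distance. -/
def Connected (G : KGraph n k) : Prop := ∀ x y : Fin n, G.dist x y ≠ ⊤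

end KGraph

open Classical in
/-- The probability that the binomial random `k`-uniform hypergraph `G^k(n,p)` (each `k`-subset
of `[n]` an edge independently with probability `p`) satisfies the property `Q`. -/
noncomputable def ghProb (n k : ℕ) (p : ℝ) (Q : KGraph n k → Prop) : ℝ :=
  ∑ E ∈ (Finset.powersetCard k (Finset.univ : Finset (Fin n))).powerset,
    if h : ∀ e ∈ E, e.card = k then
      (if Q ⟨E, h⟩ then
        p ^ E.card * (1 - p) ^ ((Finset.powersetCard k (Finset.univ : Finset (Fin n))).card - E.card)
      else 0)
    else 0

/-!
First moment argument. If `V_B` is too small for some `B ⊆ E(G)`, then after discarding edges one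
may assume `b := |B| ≤ n / k`, and `V_B` is contained in a vertex set of size
`s := ⌊bk / 2048⌋ ≤ n / 2048`. There are at most `C(n,s) C(s,k)^b` edge sets of this kind. Since
`C(s,k) ≤ (s/n)^k C(n,k)` and `C(n,s) (s/n)^s ≤ 3^s`, while `s` is much smaller than `bk`, the
powers of `s/n ≤ 1/2048` win and this number is at most `(C(n,k) / 1024^k)^b`. Hence the expected
number of bad `B` in `G^k(n,p)` is at most a geometric series with ratio `p C(n,k) / 1024^k`, which
tends to `0` because `p C(n,k)` is polynomial in `n` whereas `1024^k` is superpolynomial.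
-/

section

open Finset Filter Topology

section BinomialCoefficients

theorem choose_mul_pow_le {s n : ℕ} (h : s ≤ n) (k : ℕ) :
    s.choose k * n ^ k ≤ s ^ k * n.choose k := by
  have hdesc : s.descFactorial k * n ^ k ≤ s ^ k * n.descFactorial k := calc
    s.descFactorial k * n ^ k = ∏ i ∈ range k, (s - i) * n := by
      rw [Nat.descFactorial_eq_prod_range, prod_mul_distrib, prod_const, card_range]
    _ ≤ ∏ i ∈ range k, s * (n - i) := by
      refine prod_le_prod' fun i _ => ?_
      rw [Nat.sub_mul, Nat.mul_sub, mul_comm s i]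
      gcongr
    _ = s ^ k * n.descFactorial k := by
      rw [Nat.descFactorial_eq_prod_range, prod_mul_distrib, prod_const, card_range]
  rw [Nat.descFactorial_eq_factorial_mul_choose, Nat.descFactorial_eq_factorial_mul_choose,
    mul_assoc, mul_left_comm (s ^ k)] at hdesc
  exact Nat.le_of_mul_le_mul_left hdesc k.factorial_pos

theorem choose_mul_pow_self_le (n s : ℕ) : n.choose s * s ^ s ≤ (3 * n) ^ s := by
  have hchoose : (n.choose s : ℝ) ≤ n ^ s / s.factorial := Nat.choose_le_pow_div s n
  have hexp : (s : ℝ) ^ s / s.factorial ≤ 3 ^ s := calc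
    (s : ℝ) ^ s / s.factorial ≤ Real.exp s := Real.pow_div_factorial_le_exp _ s.cast_nonneg s
    _ = Real.exp 1 ^ s := by rw [← Real.exp_nat_mul, mul_one]
    _ ≤ 3 ^ s := by gcongr; exact Real.exp_one_lt_three.le
  have hreal : (n.choose s * s ^ s : ℝ) ≤ (3 * n) ^ s := calc
    (n.choose s * s ^ s : ℝ) ≤ n ^ s / s.factorial * s ^ s := by gcongr
    _ = s ^ s / s.factorial * n ^ s := by ring
    _ ≤ 3 ^ s * n ^ s := by gcongr
    _ = (3 * n) ^ s := (mul_pow _ _ _).symm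
  exact_mod_cast hreal

theorem choose_mul_1024_mul_pow_le {n s m : ℕ} (hn : 2048 * s ≤ n) (hm : 13 * s ≤ m) :
    n.choose s * (1024 * s) ^ m ≤ n ^ m := by
  obtain ⟨r, rfl⟩ : ∃ r, m = s + r := Nat.exists_eq_add_of_le (by lia)
  refine Nat.le_of_mul_le_mul_left ?_ (pow_pos two_pos (s + r))
  calc 2 ^ (s + r) * (n.choose s * (1024 * s) ^ (s + r))
      = 2048 ^ s * (n.choose s * s ^ s) * (2048 * s) ^ r := by
        rw [mul_left_comm, ← mul_pow, ← mul_assoc 2, pow_add]; ring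
    _ ≤ 2048 ^ s * (3 * n) ^ s * n ^ r := by gcongr; exact choose_mul_pow_self_le n s
    _ = 6144 ^ s * n ^ (s + r) := by rw [← mul_pow, ← mul_assoc, mul_pow, pow_add]; ring
    _ ≤ (2 ^ 13) ^ s * n ^ (s + r) := by gcongr; norm_num
    _ ≤ 2 ^ (s + r) * n ^ (s + r) := by rw [← pow_mul]; gcongr; norm_num

theorem le_choose {n k : ℕ} (hk : 0 < k) (hkn : k < n) : n ≤ n.choose k := by
  induction n generalizing k with
  | zero => lia
  | succ n ih =>
    obtain ⟨k, rfl⟩ := Nat.exists_eq_add_one.2 hk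
    rcases (Nat.le_of_lt_succ hkn).eq_or_lt with rfl | hlt
    · simp
    · have hpos : 0 < n.choose k := Nat.choose_pos (by lia)
      have hle : n ≤ n.choose (k + 1) := ih hk hlt
      rw [Nat.choose_succ_succ']
      lia

theorem choose_mul_eq_mul_choose_pred {k : ℕ} (n : ℕ) (hk : 0 < k) :
    n.choose k * k = n * (n - 1).choose (k - 1) := by
  obtain ⟨k, rfl⟩ := Nat.exists_eq_add_one.2 hk
  cases n with
  | zero => simp
  | succ n => exact (Nat.add_one_mul_choose_eq n k).symm

end BinomialCoefficients

section CrowdedEdgeSets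

variable {α : Type*} [Fintype α] [DecidableEq α]

/-- The crowded edge sets: sets of `b` edges of size `k` covering at most `bk / 2048` vertices. The
constant is half of the `2^12` of the theorem, to absorb the rounding of `n / k`. -/
def crowdedEdgeSets (α : Type*) [Fintype α] [DecidableEq α] (k b : ℕ) :
    Finset (Finset (Finset α)) :=
  {B ∈ powersetCard b (powersetCard k univ) | 2048 * #(B.biUnion id) ≤ b * k}

theorem card_crowdedEdgeSets_le {k b : ℕ} (h : b * k / 2048 ≤ Fintype.card α) :
    #(crowdedEdgeSets α k b) ≤
      (Fintype.card α).choose (b * k / 2048) * (b * k / 2048).choose k ^ b := by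
  have hsub : crowdedEdgeSets α k b ⊆
      (powersetCard (b * k / 2048) univ).biUnion fun S => powersetCard b (powersetCard k S) := by
    intro B hB
    obtain ⟨hB, hcrowded⟩ := mem_filter.1 hB
    obtain ⟨hBk, hBb⟩ := mem_powersetCard.1 hB
    obtain ⟨S, hBS, hS⟩ := exists_superset_card_eq (s := B.biUnion id) (n := b * k / 2048)
      (by lia) h
    refine mem_biUnion.2 ⟨S, mem_powersetCard_univ.2 hS, mem_powersetCard.2 ⟨fun e he => ?_, hBb⟩⟩
    exact mem_powersetCard.2
      ⟨(subset_biUnion_of_mem id he).trans hBS, mem_powersetCard_univ.1 (hBk he)⟩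
  calc #(crowdedEdgeSets α k b)
      ≤ #(powersetCard (b * k / 2048) (univ : Finset α)) * (b * k / 2048).choose k ^ b := by
        refine (card_le_card hsub).trans (card_biUnion_le_card_mul _ _ _ fun S hS => ?_)
        rw [card_powersetCard, card_powersetCard, mem_powersetCard_univ.1 hS]
        exact Nat.choose_le_pow _ _
    _ = _ := by rw [card_powersetCard, card_univ]

theorem card_crowdedEdgeSets_mul_le [Nonempty α] {k b : ℕ} (h : b * k ≤ Fintype.card α) :
    #(crowdedEdgeSets α k b) * 1024 ^ (k * b) ≤ (Fintype.card α).choose k ^ b := by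
  set n := Fintype.card α
  set s := b * k / 2048
  have hsn : s ≤ n := by lia
  refine Nat.le_of_mul_le_mul_left ?_ (pow_pos Fintype.card_pos (k * b) : 0 < n ^ (k * b))
  calc n ^ (k * b) * (#(crowdedEdgeSets α k b) * 1024 ^ (k * b))
      ≤ n ^ (k * b) * (n.choose s * s.choose k ^ b * 1024 ^ (k * b)) := by
        gcongr; exact card_crowdedEdgeSets_le hsn
    _ = n.choose s * 1024 ^ (k * b) * (s.choose k * n ^ k) ^ b := by
        rw [mul_pow, ← pow_mul]; ring
    _ ≤ n.choose s * 1024 ^ (k * b) * (s ^ k * n.choose k) ^ b := by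
        gcongr _ * ?_ ^ b; exact choose_mul_pow_le hsn k
    _ = n.choose s * (1024 * s) ^ (k * b) * n.choose k ^ b := by
        rw [mul_pow, mul_pow, ← pow_mul]; ring
    _ ≤ n ^ (k * b) * n.choose k ^ b := by
        gcongr; exact choose_mul_1024_mul_pow_le (by lia) (by lia)

end CrowdedEdgeSets

section WellSpread

variable {n k : ℕ}

/-- The covering property of the theorem, `|V_B| ≥ 2^(-12) min(|B| k, n)` for all `B ⊆ E(G)`. -/
def KGraph.WellSpread (G : KGraph n k) : Prop :=
  ∀ B : Finset (Finset (Fin n)), B ⊆ G.edges →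
    (2 : ℝ) ^ (-12 : ℤ) * min ((B.card : ℝ) * k) (n : ℝ) ≤ ((B.biUnion id).card : ℝ)

theorem KGraph.exists_crowded_of_not_wellSpread {G : KGraph n k} (hG : ¬ G.WellSpread) :
    ∃ b ∈ Icc 1 (n / k), ∃ B ∈ crowdedEdgeSets (Fin n) k b, B ⊆ G.edges := by
  obtain ⟨B, hBG, hB⟩ : ∃ B ⊆ G.edges, 4096 * #(B.biUnion id) < min (#B * k) n := by
    simp only [KGraph.WellSpread, not_forall, not_le] at hG
    obtain ⟨B, hBG, hB⟩ := hG
    refine ⟨B, hBG, ?_⟩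
    rify
    norm_num at hB
    linarith
  obtain ⟨hBk, hBn⟩ := lt_min_iff.1 hB
  have hcard : 0 < #B := Nat.pos_of_mul_pos_right (Nat.zero_lt_of_lt hBk)
  have hk : 0 < k := Nat.pos_of_mul_pos_left (Nat.zero_lt_of_lt hBk)
  have hkV : k ≤ #(B.biUnion id) := by
    obtain ⟨e, he⟩ := card_pos.1 hcard
    exact G.uniform e (hBG he) ▸ card_le_card (subset_biUnion_of_mem id he)
  have hdiv : n < n / k * k + k := Nat.lt_div_mul_add hk
  have hdiv_pos : 0 < n / k := Nat.div_pos (by lia) hk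
  obtain ⟨B', hB'B, hB'⟩ := exists_subset_card_eq (min_le_left #B (n / k))
  refine ⟨#B', mem_Icc.2 (by lia), B', ?_, hB'B.trans hBG⟩
  refine mem_filter.2 ⟨mem_powersetCard.2 ⟨fun e he => ?_, rfl⟩, ?_⟩
  · exact mem_powersetCard_univ.2 (G.uniform e (hBG (hB'B he)))
  · have hV : #(B'.biUnion id) ≤ #(B.biUnion id) :=
      card_le_card (biUnion_subset_biUnion_of_subset_left _ hB'B)
    rcases min_choice #B (n / k) with h | h <;> rw [hB', h] <;> lia

end WellSpread

section BinomialRandomSubset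

variable {α : Type*} {p : ℝ}

/-- The probability that the `p`-random subset of `U` equals `E`, for `E ⊆ U`. -/
def binomialWeight (U : Finset α) (p : ℝ) (E : Finset α) : ℝ :=
  p ^ #E * (1 - p) ^ (#U - #E)

theorem binomialWeight_nonneg (hp : p ∈ Set.Icc 0 1) (U E : Finset α) :
    0 ≤ binomialWeight U p E :=
  mul_nonneg (pow_nonneg hp.1 _) (pow_nonneg (sub_nonneg.2 hp.2) _)

theorem sum_binomialWeight (U : Finset α) (p : ℝ) :
    ∑ E ∈ U.powerset, binomialWeight U p E = 1 := by
  simp only [binomialWeight, sum_pow_mul_eq_add_pow, add_sub_cancel, one_pow]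

-- Expand `∏ i ∈ U, (p + g i)`, where `g` vanishes on `B` and equals `1 - p` elsewhere.
theorem sum_binomialWeight_superset [DecidableEq α] {U B : Finset α} (hB : B ⊆ U) (p : ℝ) :
    ∑ E ∈ U.powerset with B ⊆ E, binomialWeight U p E = p ^ #B := by
  have hterm : ∀ E ∈ U.powerset, (if B ⊆ E then binomialWeight U p E else 0) =
      (∏ _i ∈ E, p) * ∏ i ∈ U \ E, if i ∉ B then 1 - p else 0 := by
    intro E hE
    have hiff : (∀ i ∈ U \ E, i ∉ B) ↔ B ⊆ E := by
      grind
    simp only [prod_ite_zero, hiff, prod_const, card_sdiff_of_subset (mem_powerset.1 hE),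
      binomialWeight, mul_ite, mul_zero]
  have hfactor : ∀ i, (p + if i ∉ B then 1 - p else 0) = if i ∈ B then p else 1 := by
    intro i; split_ifs <;> simp_all
  rw [sum_filter, sum_congr rfl hterm, ← prod_add, prod_congr rfl fun i _ => hfactor i,
    prod_ite_mem, inter_eq_right.2 hB, prod_const]

end BinomialRandomSubset

section Probability

variable {n k : ℕ} {p : ℝ}

theorem card_eq_of_mem_powerset_powersetCard {E : Finset (Finset (Fin n))}
    (hE : E ∈ (powersetCard k univ).powerset) : ∀ e ∈ E, #e = k := fun _ he =>
  mem_powersetCard_univ.1 (mem_powerset.1 hE he)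

theorem ghProb_eq_sum (n k : ℕ) (p : ℝ) (Q : KGraph n k → Prop)
    [DecidablePred fun E : Finset (Finset (Fin n)) => ∃ h, Q ⟨E, h⟩] :
    ghProb n k p Q = ∑ E ∈ (powersetCard k univ).powerset with ∃ h, Q ⟨E, h⟩,
      binomialWeight (powersetCard k univ) p E := by
  rw [ghProb, sum_filter]
  refine sum_congr rfl fun E hE => ?_
  have huniform := card_eq_of_mem_powerset_powersetCard hE
  by_cases hQ : Q ⟨E, huniform⟩
  · rw [dif_pos huniform, if_pos hQ, if_pos ⟨huniform, hQ⟩, binomialWeight]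
  · rw [dif_pos huniform, if_neg hQ, if_neg fun ⟨_, h⟩ => hQ h]

theorem ghProb_nonneg (hp : p ∈ Set.Icc 0 1) (Q : KGraph n k → Prop) : 0 ≤ ghProb n k p Q := by
  classical
  rw [ghProb_eq_sum]
  exact sum_nonneg fun E _ => binomialWeight_nonneg hp _ E

theorem ghProb_mono (hp : p ∈ Set.Icc 0 1) {Q R : KGraph n k → Prop} (h : ∀ G, Q G → R G) :
    ghProb n k p Q ≤ ghProb n k p R := by
  classical
  rw [ghProb_eq_sum, ghProb_eq_sum]
  refine sum_le_sum_of_subset_of_nonneg ?_ fun E _ _ => binomialWeight_nonneg hp _ E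
  exact monotone_filter_right _ fun E _ ⟨hE, hQ⟩ => ⟨hE, h _ hQ⟩

theorem ghProb_add_ghProb_not (n k : ℕ) (p : ℝ) (Q : KGraph n k → Prop) :
    ghProb n k p Q + ghProb n k p (fun G => ¬ Q G) = 1 := by
  classical
  rw [ghProb_eq_sum, ghProb_eq_sum, ← sum_binomialWeight (powersetCard k (univ : Finset (Fin n))) p,
    ← sum_filter_add_sum_filter_not (powersetCard k univ).powerset (fun E => ∃ h, Q ⟨E, h⟩)]
  congr 2
  refine filter_congr fun E hE => ?_
  simp only [exists_prop_of_true (card_eq_of_mem_powerset_powersetCard hE)]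

theorem ghProb_le_one (hp : p ∈ Set.Icc 0 1) (Q : KGraph n k → Prop) : ghProb n k p Q ≤ 1 := by
  linarith [ghProb_add_ghProb_not n k p Q, ghProb_nonneg hp fun G => ¬ Q G]

theorem ghProb_exists_le_sum {ι : Type*} (hp : p ∈ Set.Icc 0 1) (I : Finset ι)
    (Q : ι → KGraph n k → Prop) :
    ghProb n k p (fun G => ∃ i ∈ I, Q i G) ≤ ∑ i ∈ I, ghProb n k p (Q i) := by
  classical
  simp only [ghProb_eq_sum, sum_filter]
  rw [sum_comm]
  refine sum_le_sum fun E _ => ?_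
  have hweight := binomialWeight_nonneg hp (powersetCard k univ) E
  have hnonneg : ∀ i ∈ I, 0 ≤ if ∃ h, Q i ⟨E, h⟩ then binomialWeight (powersetCard k univ) p E
      else 0 := fun i _ => ite_nonneg hweight le_rfl
  split_ifs with hE
  · obtain ⟨huniform, i, hi, hQ⟩ := hE
    exact (if_pos ⟨huniform, hQ⟩).symm.le.trans (single_le_sum hnonneg hi)
  · exact sum_nonneg hnonneg

theorem ghProb_subset_edges {B : Finset (Finset (Fin n))} (hB : B ⊆ powersetCard k univ) (p : ℝ) :
    ghProb n k p (fun G => B ⊆ G.edges) = p ^ #B := by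
  classical
  rw [ghProb_eq_sum, ← sum_binomialWeight_superset hB]
  refine sum_congr (filter_congr fun E hE => ?_) fun _ _ => rfl
  simp only [exists_prop_of_true (card_eq_of_mem_powerset_powersetCard hE)]

theorem ghProb_exists_crowded_le {b : ℕ} (hn : 0 < n) (hb : b * k ≤ n) (hp : p ∈ Set.Icc 0 1) :
    ghProb n k p (fun G => ∃ B ∈ crowdedEdgeSets (Fin n) k b, B ⊆ G.edges) ≤
      (p * n.choose k / 1024 ^ k) ^ b := by
  have : Nonempty (Fin n) := ⟨⟨0, hn⟩⟩
  have hcount : (#(crowdedEdgeSets (Fin n) k b) : ℝ) * 1024 ^ (k * b) ≤ n.choose k ^ b := by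
    have h := card_crowdedEdgeSets_mul_le (α := Fin n) (hb.trans_eq (Fintype.card_fin n).symm)
    rw [Fintype.card_fin] at h
    exact_mod_cast h
  calc ghProb n k p (fun G => ∃ B ∈ crowdedEdgeSets (Fin n) k b, B ⊆ G.edges)
      ≤ ∑ B ∈ crowdedEdgeSets (Fin n) k b, ghProb n k p (fun G => B ⊆ G.edges) :=
        ghProb_exists_le_sum hp _ _
    _ = ∑ _B ∈ crowdedEdgeSets (Fin n) k b, p ^ b := by
        refine sum_congr rfl fun B hB => ?_
        obtain ⟨hBk, hBb⟩ := mem_powersetCard.1 (mem_filter.1 hB).1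
        rw [ghProb_subset_edges hBk, hBb]
    _ = #(crowdedEdgeSets (Fin n) k b) * p ^ b := by rw [sum_const, nsmul_eq_mul]
    _ ≤ n.choose k ^ b / 1024 ^ (k * b) * p ^ b := by
        have := pow_nonneg hp.1 b
        gcongr
        rwa [le_div_iff₀ (by positivity)]
    _ = (p * n.choose k / 1024 ^ k) ^ b := by rw [div_pow, mul_pow, ← pow_mul]; ring

theorem ghProb_not_wellSpread_le (hp : p ∈ Set.Icc 0 1) (hq : p * n.choose k / 1024 ^ k < 1) :
    ghProb n k p (fun G => ¬ G.WellSpread) ≤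
      p * n.choose k / 1024 ^ k / (1 - p * n.choose k / 1024 ^ k) := by
  set q : ℝ := p * n.choose k / 1024 ^ k
  have hq₀ : 0 ≤ q := div_nonneg (mul_nonneg hp.1 (Nat.cast_nonneg _)) (by positivity)
  calc ghProb n k p (fun G => ¬ G.WellSpread)
      ≤ ghProb n k p (fun G =>
          ∃ b ∈ Icc 1 (n / k), ∃ B ∈ crowdedEdgeSets (Fin n) k b, B ⊆ G.edges) :=
        ghProb_mono hp fun _ => KGraph.exists_crowded_of_not_wellSpread
    _ ≤ ∑ b ∈ Icc 1 (n / k),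
          ghProb n k p (fun G => ∃ B ∈ crowdedEdgeSets (Fin n) k b, B ⊆ G.edges) :=
        ghProb_exists_le_sum hp _ _
    _ ≤ ∑ b ∈ Ico 1 (n / k + 1), q ^ b := by
        refine sum_le_sum fun b hb => ?_
        obtain ⟨hb₁, hbn⟩ := mem_Icc.1 hb
        have hn : 0 < n := Nat.pos_of_ne_zero (by rintro rfl; simp only [Nat.zero_div] at hbn; lia)
        exact ghProb_exists_crowded_le hn (Nat.mul_le_of_le_div k b n hbn) hp
    _ ≤ q ^ 1 / (1 - q) := geom_sum_Ico_le_of_lt_one hq₀ hq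
    _ = q / (1 - q) := by rw [pow_one]

end Probability

section DegreeCondition

variable {n k : ℕ} {p : ℝ}

theorem le_one_of_mul_choose_pred_le (hk : 2 ≤ k) (hkn : k < n)
    (hd : p * k * (n - 1).choose (k - 1) ≤ n) : p ≤ 1 := by
  have hchoose : n - 1 ≤ (n - 1).choose (k - 1) := le_choose (by lia) (by lia)
  have hle : n ≤ k * (n - 1).choose (k - 1) := calc
    n ≤ 2 * (n - 1) := by lia
    _ ≤ k * (n - 1).choose (k - 1) := Nat.mul_le_mul hk hchoose
  have hle' : (n : ℝ) ≤ k * (n - 1).choose (k - 1) := by exact_mod_cast hle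
  have hn : (0 : ℝ) < n := by exact_mod_cast Nat.zero_lt_of_lt hkn
  refine le_of_mul_le_mul_right ?_ (hn.trans_le hle')
  linarith

theorem mul_choose_le_sq (hk : 0 < k) (hp : 0 ≤ p)
    (hd : p * k * (n - 1).choose (k - 1) ≤ n) : p * n.choose k ≤ n ^ 2 := by
  have hchoose : (n.choose k : ℝ) * k = n * (n - 1).choose (k - 1) := by
    exact_mod_cast choose_mul_eq_mul_choose_pred n hk
  have hk₁ : (1 : ℝ) ≤ k := by exact_mod_cast hk
  calc p * n.choose k ≤ p * n.choose k * (k : ℝ) ^ 2 :=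
        le_mul_of_one_le_right (by positivity) (one_le_pow₀ hk₁)
    _ = p * k * (n.choose k * k) := by ring
    _ = p * k * (n - 1).choose (k - 1) * n := by rw [hchoose]; ring
    _ ≤ n * n := by gcongr
    _ = n ^ 2 := (sq _).symm

theorem tendsto_pow_div_pow_of_tendsto_div_log {k : ℕ → ℕ}
    (hk : Tendsto (fun n => (k n : ℝ) / Real.log n) atTop atTop) (a : ℕ) {c : ℝ} (hc : 1 < c) :
    Tendsto (fun n : ℕ => (n : ℝ) ^ a / c ^ k n) atTop (𝓝 0) := by
  have hlogc : 0 < Real.log c := Real.log_pos hc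
  refine tendsto_of_tendsto_of_tendsto_of_le_of_le' tendsto_const_nhds
    tendsto_one_div_atTop_nhds_zero_nat (Eventually.of_forall fun n => by positivity) ?_
  filter_upwards [hk.eventually_ge_atTop ((a + 1) / Real.log c), eventually_ge_atTop 2]
    with n hkn hn
  have hn₀ : (0 : ℝ) < n := by exact_mod_cast Nat.zero_lt_of_lt hn
  have hlogn : 0 < Real.log n := Real.log_pos (by exact_mod_cast hn)
  have hpow : (n : ℝ) ^ (a + 1) ≤ c ^ k n := by
    rw [← Real.log_le_log_iff (by positivity) (by positivity), Real.log_pow, Real.log_pow]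
    rw [div_le_div_iff₀ hlogc hlogn] at hkn
    exact_mod_cast hkn
  rw [div_le_div_iff₀ (by positivity) hn₀, one_mul, ← pow_succ]
  exact hpow

end DegreeCondition

section Asymptotics

variable {k : ℕ → ℕ} {p : ℕ → ℝ}

theorem eventually_mem_Icc_zero_one {c : ℝ} (hc : c < 1) (hk2 : ∀ n, 2 ≤ k n)
    (hp : ∀ n, 0 ≤ p n) (hkn : ∀ᶠ n in atTop, (k n : ℝ) ≤ c * n)
    (hdn : ∀ᶠ n in atTop, p n * k n * (((n - 1).choose (k n - 1) : ℕ) : ℝ) ≤ (n : ℝ)) :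
    ∀ᶠ n in atTop, p n ∈ Set.Icc 0 1 := by
  filter_upwards [hkn, hdn, eventually_gt_atTop 0] with n hkn hdn hn
  have hcn : c * n < n := mul_lt_of_lt_one_left (by exact_mod_cast hn) hc
  exact ⟨hp n, le_one_of_mul_choose_pred_le (hk2 n) (by exact_mod_cast hkn.trans_lt hcn) hdn⟩

theorem tendsto_expected_edges_div_pow (hp : ∀ n, 0 ≤ p n)
    (hk : Tendsto (fun n => (k n : ℝ) / Real.log n) atTop atTop)
    (hdn : ∀ᶠ n in atTop, p n * k n * (((n - 1).choose (k n - 1) : ℕ) : ℝ) ≤ (n : ℝ))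
    {c : ℝ} (hc : 1 < c) :
    Tendsto (fun n => p n * n.choose (k n) / c ^ k n) atTop (𝓝 0) := by
  refine tendsto_of_tendsto_of_tendsto_of_le_of_le' tendsto_const_nhds
    (tendsto_pow_div_pow_of_tendsto_div_log hk 2 hc)
    (Eventually.of_forall fun n => ?_) ?_
  · have := hp n
    positivity
  · filter_upwards [hdn, hk.eventually_gt_atTop 0] with n hdn hratio
    have hk₀ : 0 < k n := Nat.pos_of_ne_zero fun h => by simp [h] at hratio
    have hle := mul_choose_le_sq hk₀ (hp n) hdn
    gcongr

end Asymptotics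

end

theorem whp_Gknp_edge_set_overlap_large_general (k : ℕ → ℕ) (p : ℕ → ℝ)
    (hp : ∀ᶠ n in Filter.atTop, p n ∈ Set.Icc 0 1)
    (hE : Filter.Tendsto (fun n => p n * n.choose (k n) / 1024 ^ k n) Filter.atTop (nhds 0)) :
    Filter.Tendsto
      (fun n => ghProb n (k n) (p n) (fun G =>
        ∀ B : Finset (Finset (Fin n)), B ⊆ G.edges →
          (2 : ℝ) ^ (-12 : ℤ) * min ((B.card : ℝ) * k n) (n : ℝ)
            ≤ ((B.biUnion id).card : ℝ)))
      Filter.atTop (nhds 1) := by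
  have hlower : Filter.Tendsto (fun n => 1 - p n * n.choose (k n) / 1024 ^ k n /
      (1 - p n * n.choose (k n) / 1024 ^ k n)) Filter.atTop (nhds 1) := by
    simpa using (hE.div (hE.const_sub 1) (by norm_num)).const_sub 1
  refine tendsto_of_tendsto_of_tendsto_of_le_of_le' hlower tendsto_const_nhds ?_
    (hp.mono fun n hp => ghProb_le_one hp KGraph.WellSpread)
  filter_upwards [hp, hE.eventually_lt_const one_pos] with n hp hq
  have hsum := ghProb_add_ghProb_not n (k n) (p n) KGraph.WellSpread
  have hbad := ghProb_not_wellSpread_le hp hq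
  change _ ≤ ghProb n (k n) (p n) KGraph.WellSpread
  linarith

/-- whp edge sets of `G^k(n,p)` cover many vertices. -/
theorem whp_Gknp_edge_set_overlap_large (k : ℕ → ℕ) (p : ℕ → ℝ)
    (hk2 : ∀ n, 2 ≤ k n) (hp : ∀ n, 0 < p n)
    (hk : Filter.Tendsto (fun n => (k n : ℝ) / Real.log n) Filter.atTop Filter.atTop)
    (hkn : ∀ᶠ n in Filter.atTop, (k n : ℝ) ≤ (2 : ℝ) ^ (-11 : ℤ) * n)
    (hdn : ∀ᶠ n in Filter.atTop,
      p n * k n * (((n - 1).choose (k n - 1) : ℕ) : ℝ) ≤ (n : ℝ)) :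
    Filter.Tendsto
      (fun n => ghProb n (k n) (p n) (fun G =>
        ∀ B : Finset (Finset (Fin n)), B ⊆ G.edges →
          (2 : ℝ) ^ (-12 : ℤ) * min ((B.card : ℝ) * k n) (n : ℝ)
            ≤ ((B.biUnion id).card : ℝ)))
      Filter.atTop (nhds 1) := by
  have hp₀ : ∀ n, 0 ≤ p n := fun n => (hp n).le
  exact whp_Gknp_edge_set_overlap_large_general k p
    (eventually_mem_Icc_zero_one (by norm_num) hk2 hp₀ hkn hdn)
    (tendsto_expected_edges_div_pow hp₀ hk hdn (by norm_num))
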